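/- arXiv:2602.12671 — 5 statements merged into one kernel-verified Lean document; each statement's English description precedes it below -/
import Mathlib

section
/- Let (C, Δ₀, α, R) be a Hom-coassociative Rota-Baxter coalgebra of weight λ over a field of characteristic 0. Define Δ̄₋₁ = (I⊗R)∘Δ₀ + λΔ₀ and Δ̄₁ = (R⊗I)∘Δ₀. Then (C, Δ̄₋₁, Δ̄₁, α) is a Hom-dendriform coalgebra. -/
open TensorProduct

noncomputable section

variable {F : Type*} [Field F] [CharZero F]
variable {C : Type*} [AddCommGroup C] [Module F C]

/-- The flip `τ : x ⊗ y ↦ y ⊗ x` on `C ⊗ C`. -/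
def tw : C ⊗[F] C →ₗ[F] C ⊗[F] C := (TensorProduct.comm F C C).toLinearMap

/-- `(f ⊗ g)` (followed by the associator), for `f : C → C ⊗ C`, `g : C → C`. -/
def rT (f : C →ₗ[F] C ⊗[F] C) (g : C →ₗ[F] C) :
    C ⊗[F] C →ₗ[F] C ⊗[F] (C ⊗[F] C) :=
  (TensorProduct.assoc F C C C).toLinearMap ∘ₗ TensorProduct.map f g

/-- `(g ⊗ f)` for `g : C → C`, `f : C → C ⊗ C`. -/
def lT (g : C →ₗ[F] C) (f : C →ₗ[F] C ⊗[F] C) :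
    C ⊗[F] C →ₗ[F] C ⊗[F] (C ⊗[F] C) :=
  TensorProduct.map g f

/-- `τ ⊗ I` acting on `C ⊗ (C ⊗ C)` (swap of the first two factors). -/
def sw12 : C ⊗[F] (C ⊗[F] C) →ₗ[F] C ⊗[F] (C ⊗[F] C) :=
  (TensorProduct.assoc F C C C).toLinearMap ∘ₗ
    TensorProduct.map (tw : C ⊗[F] C →ₗ[F] C ⊗[F] C) (LinearMap.id : C →ₗ[F] C) ∘ₗ
    (TensorProduct.assoc F C C C).symm.toLinearMap

/-- The cyclic permutation `ξ : x ⊗ y ⊗ z ↦ y ⊗ z ⊗ x` on `C ⊗ (C ⊗ C)`. -/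
def cyc : C ⊗[F] (C ⊗[F] C) →ₗ[F] C ⊗[F] (C ⊗[F] C) :=
  TensorProduct.map (LinearMap.id : C →ₗ[F] C) (tw : C ⊗[F] C →ₗ[F] C ⊗[F] C) ∘ₗ sw12

/-- Rota-Baxter axioms of weight `lam` on a Hom-coassociative coalgebra `(C, Δ0, α)`. -/
def IsHomCoassociativeRotaBaxter (Δ0 : C →ₗ[F] C ⊗[F] C) (α R : C →ₗ[F] C) (lam : F) : Prop :=
  (lT α Δ0 ∘ₗ Δ0 = rT Δ0 α ∘ₗ Δ0) ∧
  (R ∘ₗ α = α ∘ₗ R) ∧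
  (TensorProduct.map R R ∘ₗ Δ0 =
    (TensorProduct.map R (LinearMap.id : C →ₗ[F] C) ∘ₗ Δ0 +
     TensorProduct.map (LinearMap.id : C →ₗ[F] C) R ∘ₗ Δ0 + lam • Δ0) ∘ₗ R)

/-- Hom-dendriform coalgebra axioms for `(C, Δ₋₁, Δ₁, α)`. -/
def IsHomDendriformCoalgebra (Δm Δp : C →ₗ[F] C ⊗[F] C) (α : C →ₗ[F] C) : Prop :=
  (rT Δm α ∘ₗ Δm = lT α (Δm + Δp) ∘ₗ Δm) ∧
  (rT Δp α ∘ₗ Δm = lT α Δm ∘ₗ Δp) ∧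
  (lT α Δp ∘ₗ Δp = rT (Δm + Δp) α ∘ₗ Δp)

theorem rT_fac (Δ : C →ₗ[F] C ⊗[F] C) (α f g k : C →ₗ[F] C) :
    rT (TensorProduct.map f g ∘ₗ Δ) (k ∘ₗ α) =
      TensorProduct.map f (TensorProduct.map g k) ∘ₗ rT Δ α := by
  unfold rT
  rw [TensorProduct.map_comp, ← LinearMap.comp_assoc, ← LinearMap.comp_assoc]
  congr 1
  apply TensorProduct.ext_threefold
  intro x y z
  simp

theorem lT_fac (Δ : C →ₗ[F] C ⊗[F] C) (α f g k : C →ₗ[F] C) :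
    lT (f ∘ₗ α) (TensorProduct.map g k ∘ₗ Δ) =
      TensorProduct.map f (TensorProduct.map g k) ∘ₗ lT α Δ := by
  unfold lT
  rw [TensorProduct.map_comp]

theorem rT_map (Δ : C →ₗ[F] C ⊗[F] C) (α p q : C →ₗ[F] C) :
    rT Δ α ∘ₗ TensorProduct.map p q = rT (Δ ∘ₗ p) (α ∘ₗ q) := by
  unfold rT
  rw [TensorProduct.map_comp, LinearMap.comp_assoc]

theorem lT_map (Δ : C →ₗ[F] C ⊗[F] C) (α p q : C →ₗ[F] C) :
    lT α Δ ∘ₗ TensorProduct.map p q = lT (α ∘ₗ p) (Δ ∘ₗ q) := by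
  unfold lT
  rw [TensorProduct.map_comp]

/-- A Hom-coassociative Rota-Baxter coalgebra of weight `lam` gives rise to a
Hom-dendriform coalgebra. -/
theorem rotaBaxter_homDendriformCoalgebra
    (Δ0 : C →ₗ[F] C ⊗[F] C) (α R : C →ₗ[F] C) (lam : F)
    (h : IsHomCoassociativeRotaBaxter Δ0 α R lam) :
    IsHomDendriformCoalgebra
      (TensorProduct.map (LinearMap.id : C →ₗ[F] C) R ∘ₗ Δ0 + lam • Δ0)
      (TensorProduct.map R (LinearMap.id : C →ₗ[F] C) ∘ₗ Δ0) α := by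
  obtain ⟨hc, hR, hB⟩ := h
  obtain ⟨S, hS⟩ : ∃ S : C →ₗ[F] C, S = R + lam • LinearMap.id := ⟨_, rfl⟩
  have hm : TensorProduct.map (LinearMap.id : C →ₗ[F] C) R ∘ₗ Δ0 + lam • Δ0
      = TensorProduct.map LinearMap.id S ∘ₗ Δ0 := by
    rw [hS, TensorProduct.map_add_right, TensorProduct.map_smul_right, TensorProduct.map_id,
      LinearMap.add_comp, LinearMap.smul_comp, LinearMap.id_comp]
  have hαS : α ∘ₗ S = S ∘ₗ α := by
    rw [hS, LinearMap.comp_add, LinearMap.add_comp, hR, LinearMap.comp_smul, LinearMap.smul_comp,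
      LinearMap.id_comp, LinearMap.comp_id]
  have hDR : (TensorProduct.map (LinearMap.id : C →ₗ[F] C) S ∘ₗ Δ0 +
      TensorProduct.map R (LinearMap.id : C →ₗ[F] C) ∘ₗ Δ0) ∘ₗ R
      = TensorProduct.map R R ∘ₗ Δ0 := by
    rw [hB, ← hm]
    congr 1
    abel
  have hDS : (TensorProduct.map (LinearMap.id : C →ₗ[F] C) S ∘ₗ Δ0 +
      TensorProduct.map R (LinearMap.id : C →ₗ[F] C) ∘ₗ Δ0) ∘ₗ S
      = TensorProduct.map S S ∘ₗ Δ0 := by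
    have e : TensorProduct.map S S = TensorProduct.map R R
        + lam • (TensorProduct.map LinearMap.id S + TensorProduct.map R LinearMap.id) := by
      rw [hS]
      simp only [TensorProduct.map_add_right, TensorProduct.map_add_left,
        TensorProduct.map_smul_right, TensorProduct.map_smul_left, smul_add]
      abel
    have e2 : TensorProduct.map S S ∘ₗ Δ0 = TensorProduct.map R R ∘ₗ Δ0
        + lam • (TensorProduct.map LinearMap.id S ∘ₗ Δ0
          + TensorProduct.map R LinearMap.id ∘ₗ Δ0) := by
      rw [e]
      rfl
    rw [e2, ← hDR]
    generalize TensorProduct.map LinearMap.id S ∘ₗ Δ0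
          + TensorProduct.map R LinearMap.id ∘ₗ Δ0 = D
    rw [hS, LinearMap.comp_add, LinearMap.comp_smul, LinearMap.comp_id]
  have key : ∀ f g k : C →ₗ[F] C,
      rT (TensorProduct.map f g ∘ₗ Δ0) (k ∘ₗ α) ∘ₗ Δ0
        = lT (f ∘ₗ α) (TensorProduct.map g k ∘ₗ Δ0) ∘ₗ Δ0 := by
    intro f g k
    rw [rT_fac, lT_fac, LinearMap.comp_assoc, LinearMap.comp_assoc, hc]
  rw [hm]
  refine ⟨?_, ?_, ?_⟩
  · rw [← LinearMap.comp_assoc, ← LinearMap.comp_assoc, rT_map, lT_map, hDS, hαS,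
      LinearMap.comp_id, key, LinearMap.id_comp, LinearMap.comp_id]
  · rw [← LinearMap.comp_assoc, ← LinearMap.comp_assoc, rT_map, lT_map, hαS, ← hR,
      LinearMap.comp_id, key, LinearMap.comp_id]
  · rw [← LinearMap.comp_assoc, ← LinearMap.comp_assoc, rT_map, lT_map, hDR, ← hR,
      LinearMap.comp_id, LinearMap.comp_id, ← key, LinearMap.id_comp]
end
end

section
/- Let (C, Δ₀, α, R) be a Hom-coassociative Rota-Baxter coalgebra of weight 0 over a field of characteristic 0. Define Δ = (R⊗I)∘Δ₀ − τ∘(I⊗R)∘Δ₀, where τ is the flip of C⊗C and I the identity. Then (C, Δ, α) is a Hom-preLie coalgebra. -/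
open TensorProduct

noncomputable section

variable {F : Type*} [Field F] [CharZero F]
variable {C : Type*} [AddCommGroup C] [Module F C]

/-- Hom-preLie coalgebra axiom for `(C, Δ, α)`. -/
def IsHomPreLieCoalgebra (Δ : C →ₗ[F] C ⊗[F] C) (α : C →ₗ[F] C) : Prop :=
  rT Δ α ∘ₗ Δ - lT α Δ ∘ₗ Δ = sw12 ∘ₗ (rT Δ α ∘ₗ Δ - lT α Δ ∘ₗ Δ)

theorem tw_tmul (a b : C) : (tw (a ⊗ₜ[F] b) : C ⊗[F] C) = b ⊗ₜ a := rfl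

theorem sw12_tmul (a b c : C) :
    (sw12 (a ⊗ₜ[F] (b ⊗ₜ[F] c)) : C ⊗[F] (C ⊗[F] C)) = b ⊗ₜ (a ⊗ₜ c) := rfl

theorem cyc_tmul (a b c : C) :
    (cyc (a ⊗ₜ[F] (b ⊗ₜ[F] c)) : C ⊗[F] (C ⊗[F] C)) = b ⊗ₜ (c ⊗ₜ a) := rfl

/-- The map `R ⊗ R ⊗ I`. -/
def rr (R : C →ₗ[F] C) : C ⊗[F] (C ⊗[F] C) →ₗ[F] C ⊗[F] (C ⊗[F] C) :=
  TensorProduct.map R (TensorProduct.map R LinearMap.id)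

theorem rr_tmul (R : C →ₗ[F] C) (a b c : C) :
    rr R (a ⊗ₜ[F] (b ⊗ₜ[F] c)) = R a ⊗ₜ (R b ⊗ₜ c) := rfl

theorem sw12_rT (D : C →ₗ[F] C ⊗[F] C) (α : C →ₗ[F] C) (z : C ⊗[F] C) :
    sw12 (rT D α z) = rT (tw ∘ₗ D) α z := by
  induction z with
  | zero => simp
  | add x y hx hy => simp only [map_add, hx, hy]
  | tmul a b => simp [sw12, rT]

theorem rT_E (Δ0 : C →ₗ[F] C ⊗[F] C) (α R : C →ₗ[F] C) (z : C ⊗[F] C) :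
    rT (TensorProduct.map R R ∘ₗ Δ0) α z = rr R (rT Δ0 α z) := by
  induction z with
  | zero => simp
  | add x y hx hy => simp only [map_add, hx, hy]
  | tmul a b =>
    simp only [rT, LinearMap.comp_apply, TensorProduct.map_tmul, LinearEquiv.coe_coe]
    generalize Δ0 a = u
    induction u with
    | zero => simp
    | add x y hx hy => simp only [map_add, TensorProduct.add_tmul, hx, hy]
    | tmul c d => simp [rr]

theorem rT_tw (Δ0 : C →ₗ[F] C ⊗[F] C) (α : C →ₗ[F] C) (z : C ⊗[F] C) :
    rT Δ0 α (tw z) = cyc (lT α Δ0 z) := by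
  induction z with
  | zero => simp
  | add x y hx hy => simp only [map_add, hx, hy]
  | tmul a b =>
    simp only [rT, lT, tw_tmul, LinearMap.comp_apply, TensorProduct.map_tmul, LinearEquiv.coe_coe]
    generalize Δ0 b = u
    induction u with
    | zero => simp
    | add x y hx hy => simp only [map_add, TensorProduct.add_tmul, TensorProduct.tmul_add, hx, hy]
    | tmul c d => simp [cyc_tmul]

theorem lT_one (Δ0 : C →ₗ[F] C ⊗[F] C) (α R : C →ₗ[F] C) (h : ∀ x, α (R x) = R (α x))
    (z : C ⊗[F] C) :
    lT α (TensorProduct.map R (LinearMap.id : C →ₗ[F] C) ∘ₗ Δ0 -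
        tw ∘ₗ (TensorProduct.map (LinearMap.id : C →ₗ[F] C) R ∘ₗ Δ0))
      (TensorProduct.map R LinearMap.id z) =
    rr R (lT α Δ0 z) - rr R (sw12 (cyc (cyc (lT α Δ0 z)))) := by
  induction z with
  | zero => simp
  | add x y hx hy => simp only [map_add, hx, hy]; abel
  | tmul a b =>
    simp only [lT, LinearMap.comp_apply, TensorProduct.map_tmul, LinearMap.sub_apply, h]
    generalize Δ0 b = u
    induction u with
    | zero => simp
    | add x y hx hy =>
      simp only [map_add, TensorProduct.tmul_add, add_sub_add_comm, hx, hy]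
    | tmul c d =>
      simp [cyc_tmul, sw12_tmul, rr_tmul, tw_tmul, TensorProduct.tmul_sub]

theorem lT_two (Δ0 : C →ₗ[F] C ⊗[F] C) (α R : C →ₗ[F] C) (h : ∀ x, α (R x) = R (α x))
    (z : C ⊗[F] C) :
    lT α (TensorProduct.map R (LinearMap.id : C →ₗ[F] C) ∘ₗ Δ0 -
        tw ∘ₗ (TensorProduct.map (LinearMap.id : C →ₗ[F] C) R ∘ₗ Δ0))
      (tw (TensorProduct.map LinearMap.id R z)) =
    rr R (cyc (cyc (rT Δ0 α z))) - rr R (sw12 (cyc (rT Δ0 α z))) := by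
  induction z with
  | zero => simp
  | add x y hx hy => simp only [map_add, hx, hy]; abel
  | tmul a b =>
    simp only [lT, rT, tw_tmul, LinearMap.comp_apply, TensorProduct.map_tmul,
      LinearMap.sub_apply, h, LinearEquiv.coe_coe]
    generalize Δ0 a = u
    induction u with
    | zero => simp
    | add x y hx hy =>
      simp only [map_add, TensorProduct.tmul_add, TensorProduct.add_tmul, add_sub_add_comm, hx, hy]
    | tmul c d =>
      simp [cyc_tmul, sw12_tmul, rr_tmul, tw_tmul, TensorProduct.tmul_sub]

theorem sw12_rr (R : C →ₗ[F] C) (t : C ⊗[F] (C ⊗[F] C)) :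
    sw12 (rr R t) = rr R (sw12 t) := by
  induction t with
  | zero => simp
  | add x y hx hy => simp only [map_add, hx, hy]
  | tmul a u =>
    induction u with
    | zero => simp
    | add x y hx hy => simp only [map_add, TensorProduct.tmul_add, hx, hy]
    | tmul c d => rfl

theorem sw12_sw12 (t : C ⊗[F] (C ⊗[F] C)) :
    (sw12 (sw12 t) : C ⊗[F] (C ⊗[F] C)) = t := by
  induction t with
  | zero => simp
  | add x y hx hy => simp only [map_add, hx, hy]
  | tmul a u =>
    induction u with
    | zero => simp
    | add x y hx hy => simp only [map_add, TensorProduct.tmul_add, hx, hy]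
    | tmul c d => rfl

theorem tw_tw (t : C ⊗[F] C) : (tw (tw t) : C ⊗[F] C) = t := by
  simp [tw]

theorem tw_RR (R : C →ₗ[F] C) (t : C ⊗[F] C) :
    tw (TensorProduct.map R R t) = TensorProduct.map R R (tw t) := by
  induction t with
  | zero => simp
  | add x y hx hy => simp only [map_add, hx, hy]
  | tmul a b => rfl

theorem rT_sub (f g : C →ₗ[F] C ⊗[F] C) (α : C →ₗ[F] C) (z : C ⊗[F] C) :
    rT (f - g) α z = rT f α z - rT g α z := by
  induction z with
  | zero => simp
  | add x y hx hy => simp only [map_add, hx, hy]; abel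
  | tmul a b => simp [rT, TensorProduct.sub_tmul]

theorem rT_R (D : C →ₗ[F] C ⊗[F] C) (α R : C →ₗ[F] C) (z : C ⊗[F] C) :
    rT D α (TensorProduct.map R LinearMap.id z) = rT (D ∘ₗ R) α z := by
  induction z with
  | zero => simp
  | add x y hx hy => simp only [map_add, hx, hy]
  | tmul a b => simp [rT]

theorem tw_R (R : C →ₗ[F] C) (z : C ⊗[F] C) :
    tw (TensorProduct.map LinearMap.id R z) = TensorProduct.map R LinearMap.id (tw z) := by
  induction z with
  | zero => simp
  | add x y hx hy => simp only [map_add, hx, hy]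
  | tmul a b => rfl

/-- A Hom-coassociative Rota-Baxter coalgebra of weight `0` gives a Hom-preLie
coalgebra via `Δ = (R ⊗ I) ∘ Δ₀ - τ ∘ (I ⊗ R) ∘ Δ₀`. -/
theorem rotaBaxterWeightZero_homPreLieCoalgebra
    (Δ0 : C →ₗ[F] C ⊗[F] C) (α R : C →ₗ[F] C)
    (h : IsHomCoassociativeRotaBaxter Δ0 α R (0 : F)) :
    IsHomPreLieCoalgebra
      (TensorProduct.map R (LinearMap.id : C →ₗ[F] C) ∘ₗ Δ0 -
        tw ∘ₗ (TensorProduct.map (LinearMap.id : C →ₗ[F] C) R ∘ₗ Δ0)) α := by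
  obtain ⟨h1, h2, h3⟩ := h
  have h2' : ∀ x, α (R x) = R (α x) := fun x => (LinearMap.congr_fun h2 x).symm
  have h3' : ∀ x, TensorProduct.map R R (Δ0 x) =
      TensorProduct.map R LinearMap.id (Δ0 (R x)) +
        TensorProduct.map LinearMap.id R (Δ0 (R x)) := fun x => by
    simpa using LinearMap.congr_fun h3 x
  unfold IsHomPreLieCoalgebra
  ext1 x
  have h1x : lT α Δ0 (Δ0 x) = rT Δ0 α (Δ0 x) := LinearMap.congr_fun h1 x
  have l1 := lT_one Δ0 α R h2' (Δ0 x)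
  have l2 := lT_two Δ0 α R h2' (Δ0 x)
  set D : C →ₗ[F] C ⊗[F] C := TensorProduct.map R (LinearMap.id : C →ₗ[F] C) ∘ₗ Δ0 -
        tw ∘ₗ (TensorProduct.map (LinearMap.id : C →ₗ[F] C) R ∘ₗ Δ0) with hD
  have hDx : D x = TensorProduct.map R LinearMap.id (Δ0 x) -
      tw (TensorProduct.map LinearMap.id R (Δ0 x)) := rfl
  have key : D ∘ₗ R - tw ∘ₗ (D ∘ₗ R) =
      TensorProduct.map R R ∘ₗ Δ0 - tw ∘ₗ (TensorProduct.map R R ∘ₗ Δ0) := by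
    ext1 y
    simp only [hD, LinearMap.sub_apply, LinearMap.comp_apply, h3', map_sub, map_add, tw_tw]
    abel
  have k2 : ∀ w, rT D α (TensorProduct.map R LinearMap.id w) -
      sw12 (rT D α (TensorProduct.map R LinearMap.id w)) =
      rr R (rT Δ0 α w) - sw12 (rr R (rT Δ0 α w)) := fun w => by
    rw [rT_R, sw12_rT, ← rT_sub, key, rT_sub, ← sw12_rT, rT_E]
  have ka := k2 (Δ0 x)
  have kb := k2 (tw (Δ0 x))
  rw [rT_tw, h1x] at kb
  rw [h1x] at l1
  simp only [LinearMap.sub_apply, LinearMap.comp_apply, map_sub]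
  rw [hDx]
  simp only [map_sub]
  rw [l1, l2, tw_R]
  simp only [map_sub, sw12_rr, sw12_sw12] at ka kb ⊢
  linear_combination (norm := abel) ka - kb
end
end

section
/- Let (C, γ, Δ, α) be a post-Hom-Lie coalgebra over a field of characteristic 0. Define Δ̃ = Δ + γ and γ̃ = −γ. Then (C, γ̃, Δ̃, α) is again a post-Hom-Lie coalgebra. -/
open TensorProduct

noncomputable section

variable {F : Type*} [Field F] [CharZero F]
variable {C : Type*} [AddCommGroup C] [Module F C]

/-- Hom-Lie coalgebra axioms for `(C, γ, α)`: skew-cocommutativity,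
comultiplicativity, and the Hom-co-Jacobi identity. -/
def IsHomLieCoalgebra (γ : C →ₗ[F] C ⊗[F] C) (α : C →ₗ[F] C) : Prop :=
  (γ = -(tw ∘ₗ γ)) ∧
  (γ ∘ₗ α = TensorProduct.map α α ∘ₗ γ) ∧
  ((LinearMap.id + cyc + cyc ∘ₗ cyc) ∘ₗ (lT α γ ∘ₗ γ) = 0)

/-- Post-Hom-Lie coalgebra axioms for `(C, γ, Δ, α)`. -/
def IsPostHomLieCoalgebra (γ Δ : C →ₗ[F] C ⊗[F] C) (α : C →ₗ[F] C) : Prop :=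
  IsHomLieCoalgebra γ α ∧
  (lT α γ ∘ₗ Δ - rT Δ α ∘ₗ γ - sw12 ∘ₗ (lT α Δ ∘ₗ γ) = 0) ∧
  (rT Δ α ∘ₗ Δ - lT α Δ ∘ₗ Δ - sw12 ∘ₗ (rT Δ α ∘ₗ Δ) +
    sw12 ∘ₗ (lT α Δ ∘ₗ Δ) + rT γ α ∘ₗ Δ = 0)

theorem aux_ext3 {f g : C ⊗[F] (C ⊗[F] C) →ₗ[F] C ⊗[F] (C ⊗[F] C)}
    (h : ∀ x y z : C, f (x ⊗ₜ (y ⊗ₜ z)) = g (x ⊗ₜ (y ⊗ₜ z))) : f = g := by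
  apply TensorProduct.ext
  ext x : 1
  apply TensorProduct.ext
  ext y z
  exact h x y z

theorem aux_sw (x y z : C) :
    (sw12 : C ⊗[F] (C ⊗[F] C) →ₗ[F] _) (x ⊗ₜ (y ⊗ₜ z)) = y ⊗ₜ (x ⊗ₜ z) := by
  simp [sw12, tw]

theorem aux_cyc (x y z : C) :
    (cyc : C ⊗[F] (C ⊗[F] C) →ₗ[F] _) (x ⊗ₜ (y ⊗ₜ z)) = y ⊗ₜ (z ⊗ₜ x) := by
  simp [cyc, aux_sw, tw]

theorem aux_swsw (t : C ⊗[F] (C ⊗[F] C)) : sw12 (sw12 t) = t := by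
  have : (sw12 ∘ₗ sw12 : C ⊗[F] (C ⊗[F] C) →ₗ[F] _) = LinearMap.id :=
    aux_ext3 (fun x y z => by simp [aux_sw])
  exact LinearMap.congr_fun this t

theorem aux_cyc3 (t : C ⊗[F] (C ⊗[F] C)) : cyc (cyc (cyc t)) = t := by
  have : (cyc ∘ₗ cyc ∘ₗ cyc : C ⊗[F] (C ⊗[F] C) →ₗ[F] _) = LinearMap.id :=
    aux_ext3 (fun x y z => by simp [aux_cyc])
  exact LinearMap.congr_fun this t

theorem aux_cyc2 (t : C ⊗[F] (C ⊗[F] C)) :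
    cyc (cyc t) = sw12 (TensorProduct.map (LinearMap.id : C →ₗ[F] C) tw t) := by
  have : (cyc ∘ₗ cyc : C ⊗[F] (C ⊗[F] C) →ₗ[F] _) =
      sw12 ∘ₗ TensorProduct.map (LinearMap.id : C →ₗ[F] C) tw :=
    aux_ext3 (fun x y z => by simp [aux_cyc, aux_sw, tw])
  exact LinearMap.congr_fun this t

theorem aux_cycassoc (s : C ⊗[F] C) (w : C) :
    cyc (cyc (TensorProduct.assoc F C C C (s ⊗ₜ w))) = w ⊗ₜ s := by
  induction s with
  | zero => simp
  | tmul x y => simp [aux_cyc]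
  | add a b ha hb => simp [TensorProduct.add_tmul, TensorProduct.tmul_add, ha, hb]

theorem aux_cycrT (f : C →ₗ[F] C ⊗[F] C) (g : C →ₗ[F] C) (t : C ⊗[F] C) :
    cyc (cyc (rT f g t)) = lT g f (tw t) := by
  induction t with
  | zero => simp
  | tmul x y => simp [rT, lT, tw, aux_cycassoc]
  | add a b ha hb => simp [ha, hb]

theorem aux_swrT (f : C →ₗ[F] C ⊗[F] C) (g : C →ₗ[F] C) (hf : f = -(tw ∘ₗ f))
    (t : C ⊗[F] C) : sw12 (rT f g t) = - rT f g t := by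
  induction t with
  | zero => simp
  | tmul x y =>
    have h1 : tw (f x) = - f x := by
      have := LinearMap.congr_fun hf x
      simp only [LinearMap.neg_apply, LinearMap.comp_apply] at this
      rw [eq_neg_iff_add_eq_zero, add_comm, ← eq_neg_iff_add_eq_zero]; exact this
    simp [rT, sw12, h1, TensorProduct.neg_tmul]
  | add a b ha hb => simp only [map_add, ha, hb]; abel

theorem aux_twlT (f : C →ₗ[F] C ⊗[F] C) (g : C →ₗ[F] C) (hf : f = -(tw ∘ₗ f))
    (t : C ⊗[F] C) :
    TensorProduct.map (LinearMap.id : C →ₗ[F] C) tw (lT g f t) = - lT g f t := by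
  induction t with
  | zero => simp
  | tmul x y =>
    have h1 : tw (f y) = - f y := by
      have := LinearMap.congr_fun hf y
      simp only [LinearMap.neg_apply, LinearMap.comp_apply] at this
      rw [eq_neg_iff_add_eq_zero, add_comm, ← eq_neg_iff_add_eq_zero]; exact this
    simp [lT, h1, TensorProduct.tmul_neg]
  | add a b ha hb => simp only [map_add, ha, hb]; abel

theorem aux_rT_add (f f' : C →ₗ[F] C ⊗[F] C) (g : C →ₗ[F] C) :
    rT (f + f') g = rT f g + rT f' g := by
  simp [rT, TensorProduct.map_add_left, LinearMap.comp_add]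

theorem aux_lT_add (f f' : C →ₗ[F] C ⊗[F] C) (g : C →ₗ[F] C) :
    lT g (f + f') = lT g f + lT g f' := by
  simp [lT, TensorProduct.map_add_right]

theorem aux_rT_neg (f : C →ₗ[F] C ⊗[F] C) (g : C →ₗ[F] C) :
    rT (-f) g = - rT f g := by
  rw [eq_neg_iff_add_eq_zero, ← aux_rT_add]; simp [rT]

theorem aux_lT_neg (f : C →ₗ[F] C ⊗[F] C) (g : C →ₗ[F] C) :
    lT g (-f) = - lT g f := by
  rw [eq_neg_iff_add_eq_zero, ← aux_lT_add]; simp [lT]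

/-- From a post-Hom-Lie coalgebra `(C, γ, Δ, α)` one gets a new one with
`Δ̃ = Δ + γ` and `γ̃ = -γ`. -/
theorem postHomLieCoalgebra_shift
    (γ Δ : C →ₗ[F] C ⊗[F] C) (α : C →ₗ[F] C)
    (h : IsPostHomLieCoalgebra γ Δ α) :
    IsPostHomLieCoalgebra (-γ) (Δ + γ) α := by
  obtain ⟨⟨h1, h2, h3⟩, h4, h5⟩ := h
  have e1 : ∀ x, tw (γ x) = - γ x := fun x => by
    have := LinearMap.congr_fun h1 x
    simp only [LinearMap.neg_apply, LinearMap.comp_apply] at this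
    rw [eq_neg_iff_add_eq_zero, add_comm, ← eq_neg_iff_add_eq_zero]; exact this
  have e3 : ∀ x, lT α γ (γ x) = rT γ α (γ x) + sw12 (lT α γ (γ x)) := fun x => by
    have j := LinearMap.congr_fun h3 x
    simp only [LinearMap.add_apply, LinearMap.comp_apply, LinearMap.id_apply,
      LinearMap.zero_apply] at j
    have b := congrArg cyc (aux_cycrT γ α (γ x))
    rw [aux_cyc3, e1, map_neg, map_neg] at b
    rw [aux_cyc2, aux_twlT γ α h1, map_neg] at j
    rw [b, ← sub_eq_zero, ← j]; abel
  have e4 := fun x => LinearMap.congr_fun h4 x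
  have e5 := fun x => LinearMap.congr_fun h5 x
  simp only [LinearMap.add_apply, LinearMap.sub_apply, LinearMap.comp_apply,
    LinearMap.zero_apply] at e4 e5
  refine ⟨⟨?_, ?_, ?_⟩, ?_, ?_⟩
  · ext x; simp [e1]
  · ext x
    have := LinearMap.congr_fun h2 x
    simpa using this
  · rw [aux_lT_neg, LinearMap.neg_comp, LinearMap.comp_neg, LinearMap.comp_neg, LinearMap.comp_neg, neg_neg, h3]
  · ext x
    simp only [aux_lT_neg, aux_lT_add, aux_rT_add, LinearMap.add_apply, LinearMap.sub_apply,
      LinearMap.comp_apply, LinearMap.zero_apply, LinearMap.neg_apply, map_add, map_neg]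
    linear_combination (norm := module) - e4 x - e3 x
  · ext x
    have s4 := congrArg sw12 (e4 x)
    simp only [map_sub, map_zero, aux_swsw] at s4
    have s1 := aux_swrT γ α h1 (γ x)
    have s2 := aux_swrT γ α h1 (Δ x)
    simp only [aux_rT_neg, aux_lT_add, aux_rT_add, LinearMap.add_apply, LinearMap.sub_apply,
      LinearMap.comp_apply, LinearMap.zero_apply, LinearMap.neg_apply, map_add]
    linear_combination (norm := module) e5 x - e4 x + s4 - e3 x - s1 - s2
end
end

section
/- Let (T, Δ₋₁, Δ₀, Δ₁, α) be a multiplicative Hom-tridendriform coalgebra over a field of characteristic 0. Define γ = (1 − τ)∘Δ₀ and Δ✻ = Δ₁ − τ∘Δ₋₁, where τ is the flip of T⊗T. Then (T, γ, Δ✻, α) is a post-Hom-Lie coalgebra. -/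
open TensorProduct

noncomputable section

variable {F : Type*} [Field F] [CharZero F]
variable {C : Type*} [AddCommGroup C] [Module F C]

/-- Hom-tridendriform coalgebra axioms for `(C, Δ₋₁, Δ₀, Δ₁, α)`. -/
def IsHomTridendriformCoalgebra (Δm Δ0 Δp : C →ₗ[F] C ⊗[F] C) (α : C →ₗ[F] C) : Prop :=
  (rT Δm α ∘ₗ Δm = lT α (Δm + Δ0 + Δp) ∘ₗ Δm) ∧
  (rT Δp α ∘ₗ Δm = lT α Δm ∘ₗ Δp) ∧
  (lT α Δp ∘ₗ Δp = rT (Δm + Δ0 + Δp) α ∘ₗ Δp) ∧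
  (rT Δm α ∘ₗ Δ0 = lT α Δp ∘ₗ Δ0) ∧
  (rT Δp α ∘ₗ Δ0 = lT α Δ0 ∘ₗ Δp) ∧
  (rT Δ0 α ∘ₗ Δm = lT α Δm ∘ₗ Δ0) ∧
  (rT Δ0 α ∘ₗ Δ0 = lT α Δ0 ∘ₗ Δ0)

theorem aux_tt (x : C ⊗[F] C) : tw (tw x) = x := by
  simp [tw]

theorem aux_ss (x : C ⊗[F] (C ⊗[F] C)) : sw12 (sw12 x) = x := by
  have : (sw12 ∘ₗ sw12 : C ⊗[F] (C ⊗[F] C) →ₗ[F] _) = LinearMap.id := by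
    ext a b c; simp [sw12, tw]
  exact LinearMap.congr_fun this x

theorem aux_ccc (x : C ⊗[F] (C ⊗[F] C)) : cyc (cyc (cyc x)) = x := by
  have : (cyc ∘ₗ cyc ∘ₗ cyc : C ⊗[F] (C ⊗[F] C) →ₗ[F] _) = LinearMap.id := by
    ext a b c; simp [cyc, sw12, tw]
  exact LinearMap.congr_fun this x

theorem aux_sc (x : C ⊗[F] (C ⊗[F] C)) : sw12 (cyc x) = cyc (cyc (sw12 x)) := by
  have : (sw12 ∘ₗ cyc : C ⊗[F] (C ⊗[F] C) →ₗ[F] _) = cyc ∘ₗ cyc ∘ₗ sw12 := by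
    ext a b c; simp [cyc, sw12, tw]
  exact LinearMap.congr_fun this x

theorem aux_lt (f : C →ₗ[F] C ⊗[F] C) (α : C →ₗ[F] C) (x : C ⊗[F] C) :
    lT α f (tw x) = cyc (cyc (rT f α x)) := by
  have : lT α f ∘ₗ tw = cyc ∘ₗ cyc ∘ₗ rT f α := by
    ext a b
    simp only [lT, rT, tw, TensorProduct.AlgebraTensorModule.curry_apply, LinearMap.restrictScalars_self,
      TensorProduct.curry_apply, LinearMap.comp_apply, LinearEquiv.coe_coe,
      TensorProduct.comm_tmul, TensorProduct.map_tmul]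
    induction f a using TensorProduct.induction_on with
    | zero => simp
    | tmul u v => simp [cyc, sw12, tw]
    | add u v hu hv => simp only [TensorProduct.tmul_add, TensorProduct.add_tmul, map_add, hu, hv]
  exact LinearMap.congr_fun this x

theorem aux_rt (f : C →ₗ[F] C ⊗[F] C) (α : C →ₗ[F] C) (x : C ⊗[F] C) :
    rT f α (tw x) = cyc (lT α f x) := by
  conv_rhs => rw [← aux_tt x, aux_lt, aux_ccc]

theorem aux_ltw (f : C →ₗ[F] C ⊗[F] C) (α : C →ₗ[F] C) (x : C ⊗[F] C) :
    lT α (tw ∘ₗ f) x = cyc (sw12 (lT α f x)) := by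
  have : (cyc ∘ₗ sw12 : C ⊗[F] (C ⊗[F] C) →ₗ[F] _) = TensorProduct.map LinearMap.id tw := by
    ext a b c; simp [cyc, sw12, tw]
  change _ = (cyc ∘ₗ sw12) _
  rw [this]
  induction x using TensorProduct.induction_on with
  | zero => simp
  | tmul u v => simp [lT]
  | add u v hu hv => simp only [map_add, hu, hv]

theorem aux_rtw (f : C →ₗ[F] C ⊗[F] C) (α : C →ₗ[F] C) (x : C ⊗[F] C) :
    rT (tw ∘ₗ f) α x = sw12 (rT f α x) := by
  induction x using TensorProduct.induction_on with
  | zero => simp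
  | tmul u v => simp [rT, sw12]
  | add u v hu hv => simp only [map_add, hu, hv]

theorem aux_ladd (f g : C →ₗ[F] C ⊗[F] C) (α : C →ₗ[F] C) (x : C ⊗[F] C) :
    lT α (f + g) x = lT α f x + lT α g x := by
  simp [lT, TensorProduct.map_add_right]

theorem aux_radd (f g : C →ₗ[F] C ⊗[F] C) (α : C →ₗ[F] C) (x : C ⊗[F] C) :
    rT (f + g) α x = rT f α x + rT g α x := by
  simp [rT, TensorProduct.map_add_left]

theorem aux_lsub (f g : C →ₗ[F] C ⊗[F] C) (α : C →ₗ[F] C) (x : C ⊗[F] C) :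
    lT α (f - g) x = lT α f x - lT α g x := by
  rw [eq_sub_iff_add_eq, ← aux_ladd, sub_add_cancel]

theorem aux_rsub (f g : C →ₗ[F] C ⊗[F] C) (α : C →ₗ[F] C) (x : C ⊗[F] C) :
    rT (f - g) α x = rT f α x - rT g α x := by
  rw [eq_sub_iff_add_eq, ← aux_radd, sub_add_cancel]

/-- A multiplicative Hom-tridendriform coalgebra `(T, Δ₋₁, Δ₀, Δ₁, α)` yields a
post-Hom-Lie coalgebra with `γ = (1 - τ) ∘ Δ₀` and `Δ✻ = Δ₁ - τ ∘ Δ₋₁`. -/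
theorem homTridendriform_postHomLieCoalgebra
    (Δm Δ0 Δp : C →ₗ[F] C ⊗[F] C) (α : C →ₗ[F] C)
    (h : IsHomTridendriformCoalgebra Δm Δ0 Δp α)
    (hmultm : Δm ∘ₗ α = TensorProduct.map α α ∘ₗ Δm)
    (hmult0 : Δ0 ∘ₗ α = TensorProduct.map α α ∘ₗ Δ0)
    (hmultp : Δp ∘ₗ α = TensorProduct.map α α ∘ₗ Δp) :
    IsPostHomLieCoalgebra (Δ0 - tw ∘ₗ Δ0) (Δp - tw ∘ₗ Δm) α := by
  obtain ⟨h1, h2, h3, h4, h5, h6, h7⟩ := h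
  have e1 := fun x => LinearMap.congr_fun h1 x
  have e2 := fun x => LinearMap.congr_fun h2 x
  have e3 := fun x => LinearMap.congr_fun h3 x
  have e4 := fun x => LinearMap.congr_fun h4 x
  have e5 := fun x => LinearMap.congr_fun h5 x
  have e6 := fun x => LinearMap.congr_fun h6 x
  have e7 := fun x => LinearMap.congr_fun h7 x
  simp only [LinearMap.comp_apply, aux_ladd, aux_radd] at e1 e2 e3 e4 e5 e6 e7
  refine ⟨⟨?_, ?_, ?_⟩, ?_, ?_⟩
  · ext x
    simp only [LinearMap.comp_apply, LinearMap.sub_apply, LinearMap.neg_apply, map_sub, aux_tt]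
    abel
  · have key : ∀ y : C ⊗[F] C, tw (TensorProduct.map α α y) = TensorProduct.map α α (tw y) := by
      intro y
      induction y using TensorProduct.induction_on with
      | zero => simp
      | tmul u v => simp [tw]
      | add u v hu hv => simp only [map_add, hu, hv]
    ext x
    have := LinearMap.congr_fun hmult0 x
    simp only [LinearMap.comp_apply] at this
    simp only [LinearMap.comp_apply, LinearMap.sub_apply, map_sub, this, key]
  · ext x
    simp only [LinearMap.comp_apply, LinearMap.sub_apply, LinearMap.add_apply, LinearMap.id_apply,
      LinearMap.zero_apply, map_sub, map_add, aux_lsub, aux_rsub, aux_lt, aux_rt, aux_ltw, aux_rtw,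
      aux_sc, aux_ss, aux_ccc, e7]
    abel
  · ext x
    simp only [LinearMap.comp_apply, LinearMap.sub_apply, LinearMap.add_apply, LinearMap.id_apply,
      LinearMap.zero_apply, map_sub, map_add, aux_lsub, aux_rsub, aux_lt, aux_rt, aux_ltw, aux_rtw,
      aux_sc, aux_ss, aux_ccc, e4, e5, e6]
    abel
  · ext x
    simp only [LinearMap.comp_apply, LinearMap.sub_apply, LinearMap.add_apply, LinearMap.id_apply,
      LinearMap.zero_apply, map_sub, map_add, aux_lsub, aux_rsub, aux_lt, aux_rt, aux_ltw, aux_rtw,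
      aux_sc, aux_ss, aux_ccc, e1, e2, e3]
    abel
end
end

section
/- Let (M, Δ_⋄, Δ_•, α_M) be a comodule over a multiplicative post-Hom-Lie coalgebra (L, γ, Δ, α) over a field of characteristic 0. For any natural number n define Δ_⋄⁽ⁿ⁾ = (αⁿ⊗Id_M)∘Δ_⋄ : M → L⊗M and Δ_•⁽ⁿ⁾ = (αⁿ⊗Id_M)∘Δ_• : M → L⊗M. Then (M, Δ_⋄⁽ⁿ⁾, Δ_•⁽ⁿ⁾, α_M) is again a comodule over (L, γ, Δ, α). -/
open TensorProduct

noncomputable section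

variable {F : Type*} [Field F] [CharZero F]
variable {C : Type*} [AddCommGroup C] [Module F C]

variable {M : Type*} [AddCommGroup M] [Module F M]

/-- `(f ⊗ g)` (followed by the associator) for `f : C → C ⊗ C`, `g : M → M`. -/
def rTM (f : C →ₗ[F] C ⊗[F] C) (g : M →ₗ[F] M) :
    C ⊗[F] M →ₗ[F] C ⊗[F] (C ⊗[F] M) :=
  (TensorProduct.assoc F C C M).toLinearMap ∘ₗ TensorProduct.map f g

/-- `(g ⊗ f)` for `g : C → C`, `f : M → C ⊗ M`. -/
def lTM (g : C →ₗ[F] C) (f : M →ₗ[F] C ⊗[F] M) :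
    C ⊗[F] M →ₗ[F] C ⊗[F] (C ⊗[F] M) :=
  TensorProduct.map g f

/-- `τ ⊗ Id_M` acting on `C ⊗ (C ⊗ M)` (swap of the two `C`-factors). -/
def sw12M : C ⊗[F] (C ⊗[F] M) →ₗ[F] C ⊗[F] (C ⊗[F] M) :=
  (TensorProduct.assoc F C C M).toLinearMap ∘ₗ
    TensorProduct.map (tw : C ⊗[F] C →ₗ[F] C ⊗[F] C) (LinearMap.id : M →ₗ[F] M) ∘ₗ
    (TensorProduct.assoc F C C M).symm.toLinearMap

/-- Comodule axioms over a post-Hom-Lie coalgebra `(C, γ, Δ, α)`, with structure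
maps `Dd = Δ_⋄` and `Db = Δ_•`. -/
def IsPostHomLieComodule (γ Δ : C →ₗ[F] C ⊗[F] C) (α : C →ₗ[F] C)
    (Dd Db : M →ₗ[F] C ⊗[F] M) (αM : M →ₗ[F] M) : Prop :=
  (Dd ∘ₗ αM = TensorProduct.map α αM ∘ₗ Dd) ∧
  (Db ∘ₗ αM = TensorProduct.map α αM ∘ₗ Db) ∧
  (rTM γ αM ∘ₗ Dd = lTM α Dd ∘ₗ Dd - sw12M ∘ₗ (lTM α Dd ∘ₗ Dd)) ∧
  (rTM Δ αM ∘ₗ Dd = lTM α Dd ∘ₗ Db - sw12M ∘ₗ (lTM α Db ∘ₗ Db)) ∧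
  (rTM γ αM ∘ₗ Db =
    (lTM α Db ∘ₗ Db - sw12M ∘ₗ (lTM α Db ∘ₗ Db)) +
    (sw12M ∘ₗ (rTM Δ αM ∘ₗ Db) - rTM Δ αM ∘ₗ Db))

theorem aux_sw_s17 (β : C →ₗ[F] C) :
    (sw12M : C ⊗[F] (C ⊗[F] M) →ₗ[F] _) ∘ₗ
      TensorProduct.map β (TensorProduct.map β (LinearMap.id : M →ₗ[F] M)) =
    TensorProduct.map β (TensorProduct.map β (LinearMap.id : M →ₗ[F] M)) ∘ₗ sw12M := by
  ext x y m
  simp [sw12M, tw]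

theorem aux_rTM (f : C →ₗ[F] C ⊗[F] C) (β : C →ₗ[F] C) (g : M →ₗ[F] M)
    (hf : f ∘ₗ β = TensorProduct.map β β ∘ₗ f) :
    rTM f g ∘ₗ TensorProduct.map β (LinearMap.id : M →ₗ[F] M) =
    TensorProduct.map β (TensorProduct.map β (LinearMap.id : M →ₗ[F] M)) ∘ₗ rTM f g := by
  ext x m
  have hx : f (β x) = TensorProduct.map β β (f x) := LinearMap.congr_fun hf x
  simp only [rTM, TensorProduct.AlgebraTensorModule.curry_apply, LinearMap.coe_restrictScalars,
    TensorProduct.curry_apply, LinearMap.comp_apply, TensorProduct.map_tmul, LinearMap.id_apply,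
    LinearEquiv.coe_coe, hx]
  induction f x using TensorProduct.induction_on with
  | zero => simp
  | tmul a b => simp
  | add a b ha hb => simp only [map_add, TensorProduct.add_tmul, ha, hb]

theorem aux_lTM (α : C →ₗ[F] C) (n : ℕ) (D : M →ₗ[F] C ⊗[F] M) :
    lTM α (TensorProduct.map (α ^ n) (LinearMap.id : M →ₗ[F] M) ∘ₗ D) ∘ₗ
      TensorProduct.map (α ^ n) (LinearMap.id : M →ₗ[F] M) =
    TensorProduct.map (α ^ n) (TensorProduct.map (α ^ n) (LinearMap.id : M →ₗ[F] M)) ∘ₗ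
      lTM α D := by
  have hc : α ∘ₗ (α ^ n) = (α ^ n) ∘ₗ α := ((Commute.refl α).pow_right n).eq
  simp only [lTM, ← TensorProduct.map_comp, LinearMap.comp_id, hc]

theorem aux_pow (f : C →ₗ[F] C ⊗[F] C) (α : C →ₗ[F] C)
    (hf : f ∘ₗ α = TensorProduct.map α α ∘ₗ f) (n : ℕ) :
    f ∘ₗ (α ^ n) = TensorProduct.map (α ^ n) (α ^ n) ∘ₗ f := by
  induction n with
  | zero => simp [Module.End.one_eq_id]
  | succ k ih =>
    rw [pow_succ, Module.End.mul_eq_comp, ← LinearMap.comp_assoc, ih, LinearMap.comp_assoc, hf,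
      ← LinearMap.comp_assoc, TensorProduct.map_comp]

theorem aux_comm (α : C →ₗ[F] C) (αM : M →ₗ[F] M) (n : ℕ) (D : M →ₗ[F] C ⊗[F] M)
    (hD : D ∘ₗ αM = TensorProduct.map α αM ∘ₗ D) :
    (TensorProduct.map (α ^ n) (LinearMap.id : M →ₗ[F] M) ∘ₗ D) ∘ₗ αM =
    TensorProduct.map α αM ∘ₗ (TensorProduct.map (α ^ n) (LinearMap.id : M →ₗ[F] M) ∘ₗ D) := by
  have hc : α ∘ₗ (α ^ n) = (α ^ n) ∘ₗ α := ((Commute.refl α).pow_right n).eq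
  rw [LinearMap.comp_assoc, hD, ← LinearMap.comp_assoc, ← LinearMap.comp_assoc,
    ← TensorProduct.map_comp, ← TensorProduct.map_comp, hc, LinearMap.comp_id, LinearMap.id_comp]

/-- Twisting the structure maps of a comodule over a multiplicative post-Hom-Lie
coalgebra by `α^n ⊗ Id_M` gives again a comodule. -/
theorem postHomLieComodule_twist_pow
    (γ Δ : C →ₗ[F] C ⊗[F] C) (α : C →ₗ[F] C)
    (Dd Db : M →ₗ[F] C ⊗[F] M) (αM : M →ₗ[F] M)
    (h : IsPostHomLieCoalgebra γ Δ α)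
    (hmult : Δ ∘ₗ α = TensorProduct.map α α ∘ₗ Δ)
    (hM : IsPostHomLieComodule γ Δ α Dd Db αM) (n : ℕ) :
    IsPostHomLieComodule γ Δ α
      (TensorProduct.map (α ^ n) (LinearMap.id : M →ₗ[F] M) ∘ₗ Dd)
      (TensorProduct.map (α ^ n) (LinearMap.id : M →ₗ[F] M) ∘ₗ Db) αM := by
  obtain ⟨h1, h2, h3, h4, h5⟩ := hM
  have rγ := aux_rTM γ (α ^ n) αM (aux_pow γ α h.1.2.1 n)
  have rΔ := aux_rTM Δ (α ^ n) αM (aux_pow Δ α hmult n)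
  have s := aux_sw_s17 (M := M) (α ^ n)
  have l := aux_lTM (M := M) α n
  have key : ∀ D D' : M →ₗ[F] C ⊗[F] M,
      lTM α (TensorProduct.map (α ^ n) (LinearMap.id : M →ₗ[F] M) ∘ₗ D) ∘ₗ
        (TensorProduct.map (α ^ n) (LinearMap.id : M →ₗ[F] M) ∘ₗ D') =
      TensorProduct.map (α ^ n) (TensorProduct.map (α ^ n) (LinearMap.id : M →ₗ[F] M)) ∘ₗ
        (lTM α D ∘ₗ D') := by
    intro D D'
    rw [← LinearMap.comp_assoc, l, LinearMap.comp_assoc]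
  refine ⟨aux_comm α αM n Dd h1, aux_comm α αM n Db h2, ?_, ?_, ?_⟩
  · rw [key, ← LinearMap.comp_assoc, rγ, ← LinearMap.comp_assoc _ _ sw12M, s,
      LinearMap.comp_assoc, h3, LinearMap.comp_sub, LinearMap.comp_assoc]
  · rw [key, key, ← LinearMap.comp_assoc, rΔ, ← LinearMap.comp_assoc _ _ sw12M, s,
      LinearMap.comp_assoc, h4, LinearMap.comp_sub, LinearMap.comp_assoc]
  · rw [key, ← LinearMap.comp_assoc _ _ (rTM γ αM), ← LinearMap.comp_assoc _ _ (rTM Δ αM), rγ, rΔ,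
      LinearMap.comp_assoc _ (rTM γ αM), LinearMap.comp_assoc _ (rTM Δ αM), ← LinearMap.comp_assoc _ _ sw12M,
      ← LinearMap.comp_assoc _ _ sw12M, s, h5,
      LinearMap.comp_add, LinearMap.comp_sub, LinearMap.comp_sub, LinearMap.comp_assoc,
      LinearMap.comp_assoc]
end
end
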